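/- Consider a tanh network of width W and weight bound R on ℝ^d, and assume additionally R·W ≥ 2. Then for every layer index ℓ ≥ 1, every component index i < W, all coordinates k, m, s < d, and every x ∈ ℝ^d, the third-order partial derivative satisfies |∂³_{x_k x_m x_s} v^{(ℓ)}_i(x)| ≤ 10·R^{3ℓ}·W^{3ℓ−3}. -/

import Mathlib

/-!
Each layer scales an affine combination of the previous layer by `M = R W`, and composing with
`tanh` adds the lower-order terms of the chain rule, whose coefficients are controlled by
`|tanh'| ≤ 1`, `|tanh''| ≤ 1` and `|tanh'''| ≤ 2`. If the previous layer has derivative bounds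
`(D, 2 D², 10 D³)`, then the new layer has bounds `M D`, `2 M D² + (M D)²` and
`10 M D³ + 6 M² D³ + 2 (M D)³`. Since `M ≥ 2`, these are at most `D'`, `2 D'²` and `10 D'³` with
`D' = M D`, so the shape of the bounds is preserved and only `D` grows.
-/

/-- The partial derivative of `f : ℝ^d → ℝ` in the `k`-th coordinate direction. -/
noncomputable def pd {d : ℕ} (f : (Fin d → ℝ) → ℝ) (k : Fin d) : (Fin d → ℝ) → ℝ :=
  fun x => fderiv ℝ f x (Pi.single k 1)

section PartialDerivatives

variable {d : ℕ} {f g u : (Fin d → ℝ) → ℝ} {φ : ℝ → ℝ}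

theorem contDiff_pd {m n : WithTop ℕ∞} (hf : ContDiff ℝ n f) (hmn : m + 1 ≤ n) (k : Fin d) :
    ContDiff ℝ m (pd f k) :=
  (hf.fderiv_right hmn).clm_apply contDiff_const

theorem pd_const (c : ℝ) (k : Fin d) : pd (fun _ => c) k = fun _ => 0 := by
  funext x
  simp [pd]

theorem pd_apply (j k : Fin d) :
    pd (fun x => x j) k = fun _ => Pi.single (M := fun _ => ℝ) k 1 j := by
  funext x
  simp [pd, (hasFDerivAt_apply j x).fderiv]

theorem pd_add_const (f : (Fin d → ℝ) → ℝ) (c : ℝ) (k : Fin d) :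
    pd (fun x => f x + c) k = pd f k := by
  funext x
  simp [pd]

theorem pd_add (hf : Differentiable ℝ f) (hg : Differentiable ℝ g) (k : Fin d) :
    pd (fun x => f x + g x) k = fun x => pd f k x + pd g k x := by
  funext x
  simp [pd, fderiv_fun_add (hf x) (hg x)]

theorem pd_mul (hf : Differentiable ℝ f) (hg : Differentiable ℝ g) (k : Fin d) :
    pd (fun x => f x * g x) k = fun x => pd f k x * g x + f x * pd g k x := by
  funext x
  simp only [pd, fderiv_fun_mul (hf x) (hg x), add_apply, smul_apply, smul_eq_mul]
  ring

theorem pd_sum_mul {ι : Type*} [Fintype ι] (a : ι → ℝ) {w : ι → (Fin d → ℝ) → ℝ}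
    (hw : ∀ j, Differentiable ℝ (w j)) (k : Fin d) :
    pd (fun x => ∑ j, a j * w j x) k = fun x => ∑ j, a j * pd (w j) k x := by
  funext x
  have h := HasFDerivAt.fun_sum (u := Finset.univ) fun j _ =>
    (hw j x).hasFDerivAt.const_mul (a j)
  simp [pd, h.fderiv]

theorem pd_linear (a : Fin d → ℝ) (k : Fin d) :
    pd (fun x => ∑ j, a j * x j) k = fun _ => a k := by
  rw [pd_sum_mul a fun j => differentiable_apply j]
  simp [pd_apply, Pi.single_apply]

theorem pd_comp (hφ : Differentiable ℝ φ) (hu : Differentiable ℝ u) (k : Fin d) :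
    pd (fun x => φ (u x)) k = fun x => deriv φ (u x) * pd u k x := by
  funext x
  have h : HasFDerivAt (fun y => φ (u y)) (deriv φ (u x) • fderiv ℝ u x) x :=
    (hφ (u x)).hasDerivAt.comp_hasFDerivAt x (hu x).hasFDerivAt
  simp only [pd, h.fderiv, smul_apply, smul_eq_mul]

theorem pd_pd_comp (hφ : ContDiff ℝ 2 φ) (hu : ContDiff ℝ 2 u) (k m : Fin d) :
    pd (pd (fun x => φ (u x)) k) m = fun x =>
      deriv φ (u x) * pd (pd u k) m x + deriv (deriv φ) (u x) * (pd u k x * pd u m x) := by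
  have dφ' : Differentiable ℝ (deriv φ) := hφ.differentiable_deriv_two
  have du : Differentiable ℝ u := hu.differentiable (by norm_num)
  have dφ'u : Differentiable ℝ fun x => deriv φ (u x) := dφ'.comp du
  have duk : Differentiable ℝ (pd u k) :=
    (contDiff_pd hu (m := 1) (by norm_num) k).differentiable (by norm_num)
  rw [pd_comp (hφ.differentiable (by norm_num)) du, pd_mul dφ'u duk, pd_comp dφ' du]
  funext x
  ring

theorem pd_pd_pd_comp (hφ : ContDiff ℝ 3 φ) (hu : ContDiff ℝ 3 u) (k m s : Fin d) :
    pd (pd (pd (fun x => φ (u x)) k) m) s = fun x =>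
      deriv φ (u x) * pd (pd (pd u k) m) s x
        + deriv (deriv φ) (u x) * (pd (pd u k) m x * pd u s x + pd (pd u k) s x * pd u m x
          + pd u k x * pd (pd u m) s x)
        + deriv (deriv (deriv φ)) (u x) * (pd u k x * pd u m x * pd u s x) := by
  have hφ' : ContDiff ℝ 2 (deriv φ) := hφ.deriv'
  have dφ' : Differentiable ℝ (deriv φ) := hφ'.differentiable (by norm_num)
  have dφ'' : Differentiable ℝ (deriv (deriv φ)) := hφ'.differentiable_deriv_two
  have du : Differentiable ℝ u := hu.differentiable (by norm_num)
  have hpd (i : Fin d) : ContDiff ℝ 2 (pd u i) := contDiff_pd hu (by norm_num) i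
  have dpd (i : Fin d) : Differentiable ℝ (pd u i) := (hpd i).differentiable (by norm_num)
  have dpd₂ : Differentiable ℝ (pd (pd u k) m) :=
    (contDiff_pd (hpd k) (m := 1) (by norm_num) m).differentiable (by norm_num)
  have dφ'u : Differentiable ℝ fun x => deriv φ (u x) := dφ'.comp du
  have dφ''u : Differentiable ℝ fun x => deriv (deriv φ) (u x) := dφ''.comp du
  have dprod : Differentiable ℝ fun x => pd u k x * pd u m x := (dpd k).mul (dpd m)
  rw [pd_pd_comp (hφ.of_le (by norm_num)) (hu.of_le (by norm_num)),
    pd_add (dφ'u.fun_mul dpd₂) (dφ''u.fun_mul dprod), pd_mul dφ'u dpd₂, pd_mul dφ''u dprod,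
    pd_mul (dpd k) (dpd m), pd_comp dφ' du, pd_comp dφ'' du]
  funext x
  ring

end PartialDerivatives

section Tanh

open Real

theorem contDiff_tanh {n : WithTop ℕ∞} : ContDiff ℝ n tanh := by
  rw [funext tanh_eq_sinh_div_cosh]
  exact contDiff_sinh.div contDiff_cosh fun t => (cosh_pos t).ne'

theorem hasDerivAt_tanh (t : ℝ) : HasDerivAt tanh (1 - tanh t ^ 2) t := by
  have hcosh := (cosh_pos t).ne'
  have h := (hasDerivAt_sinh t).fun_div (hasDerivAt_cosh t) hcosh
  simp only [← tanh_eq_sinh_div_cosh] at h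
  refine h.congr_deriv ?_
  rw [tanh_eq_sinh_div_cosh]
  field_simp

theorem deriv_tanh : deriv tanh = fun t => 1 - tanh t ^ 2 :=
  funext fun t => (hasDerivAt_tanh t).deriv

theorem deriv_deriv_tanh : deriv (deriv tanh) = fun t => -2 * tanh t * (1 - tanh t ^ 2) := by
  rw [deriv_tanh]
  funext t
  rw [(((hasDerivAt_tanh t).fun_pow 2).const_sub 1).deriv]
  ring

theorem deriv_deriv_deriv_tanh :
    deriv (deriv (deriv tanh)) = fun t => (6 * tanh t ^ 2 - 2) * (1 - tanh t ^ 2) := by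
  rw [deriv_deriv_tanh]
  funext t
  have h := hasDerivAt_tanh t
  rw [((h.const_mul (-2)).fun_mul ((h.fun_pow 2).const_sub 1)).deriv]
  ring

theorem norm_deriv_tanh_le (t : ℝ) : ‖deriv tanh t‖ ≤ 1 := by
  rw [deriv_tanh, norm_eq_abs, abs_le]
  constructor <;> linarith [sq_nonneg (tanh t), tanh_sq_lt_one t]

theorem norm_deriv_deriv_tanh_le (t : ℝ) : ‖deriv (deriv tanh) t‖ ≤ 1 := by
  have h₁ : 0 ≤ 1 - tanh t := sub_nonneg.2 (tanh_lt_one t).le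
  have h₂ : 0 ≤ 1 + tanh t := by linarith [neg_one_lt_tanh t]
  rw [deriv_deriv_tanh, norm_eq_abs, abs_le]
  -- with `t` for `tanh t`: `2 - 4 t (1 - t²) = (1 + t) (1 - 2 t)² + (1 - t)`, and likewise for `-t`
  constructor
  · linarith [mul_nonneg h₂ (sq_nonneg (1 - 2 * tanh t))]
  · linarith [mul_nonneg h₁ (sq_nonneg (1 + 2 * tanh t))]

theorem norm_deriv_deriv_deriv_tanh_le (t : ℝ) : ‖deriv (deriv (deriv tanh)) t‖ ≤ 2 := by
  have h₀ : 0 ≤ tanh t ^ 2 := sq_nonneg _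
  have h₁ : 0 ≤ 1 - tanh t ^ 2 := sub_nonneg.2 (tanh_sq_lt_one t).le
  rw [deriv_deriv_deriv_tanh, norm_eq_abs, abs_le]
  constructor <;> nlinarith [mul_nonneg h₀ h₁]

end Tanh

/-- `PartialDerivBounds f c₁ c₂ c₃` says that `f` is of class `C³` and that its partial derivatives
of order one, two and three are bounded everywhere by `c₁`, `c₂` and `c₃` respectively. -/
structure PartialDerivBounds {d : ℕ} (f : (Fin d → ℝ) → ℝ) (c₁ c₂ c₃ : ℝ) : Prop where
  contDiff : ContDiff ℝ 3 f
  norm_pd_le : ∀ k x, ‖pd f k x‖ ≤ c₁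
  norm_pd_pd_le : ∀ k m x, ‖pd (pd f k) m x‖ ≤ c₂
  norm_pd_pd_pd_le : ∀ k m s x, ‖pd (pd (pd f k) m) s x‖ ≤ c₃

theorem norm_sum_mul_le {ι α : Type*} [Fintype ι] [NonUnitalSeminormedRing α]
    {a w : ι → α} {R C : ℝ} (ha : ∀ j, ‖a j‖ ≤ R) (hw : ∀ j, ‖w j‖ ≤ C) :
    ‖∑ j, a j * w j‖ ≤ R * Fintype.card ι * C :=
  calc ‖∑ j, a j * w j‖ ≤ ∑ _j : ι, R * C :=
        norm_sum_le_of_le _ fun j _ => norm_mul_le_of_le (ha j) (hw j)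
    _ = R * Fintype.card ι * C := by
        rw [Finset.sum_const, Finset.card_univ, nsmul_eq_mul]
        ring

namespace PartialDerivBounds

variable {d : ℕ} {f u : (Fin d → ℝ) → ℝ} {c₁ c₂ c₃ : ℝ}

theorem mono {c₁' c₂' c₃' : ℝ} (hf : PartialDerivBounds f c₁ c₂ c₃) (h₁ : c₁ ≤ c₁')
    (h₂ : c₂ ≤ c₂') (h₃ : c₃ ≤ c₃') : PartialDerivBounds f c₁' c₂' c₃' where
  contDiff := hf.contDiff
  norm_pd_le k x := (hf.norm_pd_le k x).trans h₁
  norm_pd_pd_le k m x := (hf.norm_pd_pd_le k m x).trans h₂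
  norm_pd_pd_pd_le k m s x := (hf.norm_pd_pd_pd_le k m s x).trans h₃

theorem add_const (hf : PartialDerivBounds f c₁ c₂ c₃) (c : ℝ) :
    PartialDerivBounds (fun x => f x + c) c₁ c₂ c₃ where
  contDiff := hf.contDiff.add contDiff_const
  norm_pd_le := by simpa only [pd_add_const] using hf.norm_pd_le
  norm_pd_pd_le := by simpa only [pd_add_const] using hf.norm_pd_pd_le
  norm_pd_pd_pd_le := by simpa only [pd_add_const] using hf.norm_pd_pd_pd_le

theorem linear {a : Fin d → ℝ} {R : ℝ} (ha : ∀ j, ‖a j‖ ≤ R) :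
    PartialDerivBounds (fun x => ∑ j, a j * x j) R 0 0 where
  contDiff := ContDiff.sum fun j _ => contDiff_const.mul (contDiff_apply ℝ ℝ j)
  norm_pd_le k x := by simpa only [pd_linear] using ha k
  norm_pd_pd_le k m x := by simp only [pd_linear, pd_const, norm_zero, le_refl]
  norm_pd_pd_pd_le k m s x := by simp only [pd_linear, pd_const, norm_zero, le_refl]

theorem sum_mul {ι : Type*} [Fintype ι] {a : ι → ℝ} {w : ι → (Fin d → ℝ) → ℝ} {R : ℝ}
    (ha : ∀ j, ‖a j‖ ≤ R) (hw : ∀ j, PartialDerivBounds (w j) c₁ c₂ c₃) :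
    PartialDerivBounds (fun x => ∑ j, a j * w j x)
      (R * Fintype.card ι * c₁) (R * Fintype.card ι * c₂) (R * Fintype.card ι * c₃) := by
  have dw (j : ι) : Differentiable ℝ (w j) := (hw j).contDiff.differentiable (by norm_num)
  have hpd (k : Fin d) (j : ι) : ContDiff ℝ 2 (pd (w j) k) :=
    contDiff_pd (hw j).contDiff (by norm_num) k
  have dpd (k : Fin d) (j : ι) : Differentiable ℝ (pd (w j) k) :=
    (hpd k j).differentiable (by norm_num)
  have dpd₂ (k m : Fin d) (j : ι) : Differentiable ℝ (pd (pd (w j) k) m) :=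
    (contDiff_pd (hpd k j) (m := 1) (by norm_num) m).differentiable (by norm_num)
  constructor
  · exact ContDiff.sum fun j _ => contDiff_const.mul (hw j).contDiff
  · intro k x
    rw [pd_sum_mul a dw]
    exact norm_sum_mul_le ha fun j => (hw j).norm_pd_le k x
  · intro k m x
    rw [pd_sum_mul a dw, pd_sum_mul a (dpd k)]
    exact norm_sum_mul_le ha fun j => (hw j).norm_pd_pd_le k m x
  · intro k m s x
    rw [pd_sum_mul a dw, pd_sum_mul a (dpd k), pd_sum_mul a (dpd₂ k m)]
    exact norm_sum_mul_le ha fun j => (hw j).norm_pd_pd_pd_le k m s x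

theorem comp {φ : ℝ → ℝ} {M₁ M₂ M₃ : ℝ} (hφ : ContDiff ℝ 3 φ) (h₁ : ∀ t, ‖deriv φ t‖ ≤ M₁)
    (h₂ : ∀ t, ‖deriv (deriv φ) t‖ ≤ M₂) (h₃ : ∀ t, ‖deriv (deriv (deriv φ)) t‖ ≤ M₃)
    (hu : PartialDerivBounds u c₁ c₂ c₃) :
    PartialDerivBounds (fun x => φ (u x)) (M₁ * c₁) (M₁ * c₂ + M₂ * c₁ ^ 2)
      (M₁ * c₃ + 3 * M₂ * c₁ * c₂ + M₃ * c₁ ^ 3) := by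
  constructor
  · exact hφ.comp hu.contDiff
  · intro k x
    rw [pd_comp (hφ.differentiable (by norm_num)) (hu.contDiff.differentiable (by norm_num))]
    exact norm_mul_le_of_le (h₁ _) (hu.norm_pd_le k x)
  · intro k m x
    rw [pd_pd_comp (hφ.of_le (by norm_num)) (hu.contDiff.of_le (by norm_num)), sq c₁]
    exact norm_add_le_of_le (norm_mul_le_of_le (h₁ _) (hu.norm_pd_pd_le k m x))
      (norm_mul_le_of_le (h₂ _) (norm_mul_le_of_le (hu.norm_pd_le k x) (hu.norm_pd_le m x)))
  · intro k m s x
    rw [pd_pd_pd_comp hφ hu.contDiff]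
    have hu₁ (i : Fin d) := hu.norm_pd_le i x
    have hu₂ (i j : Fin d) := hu.norm_pd_pd_le i j x
    have mixed_terms := norm_add_le_of_le
      (norm_add_le_of_le (norm_mul_le_of_le (hu₂ k m) (hu₁ s))
        (norm_mul_le_of_le (hu₂ k s) (hu₁ m)))
      (norm_mul_le_of_le (hu₁ k) (hu₂ m s))
    have cubic_term := norm_mul_le_of_le (norm_mul_le_of_le (hu₁ k) (hu₁ m)) (hu₁ s)
    refine (norm_add_le_of_le (norm_add_le_of_le
      (norm_mul_le_of_le (h₁ _) (hu.norm_pd_pd_pd_le k m s x))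
      (norm_mul_le_of_le (h₂ _) mixed_terms)) (norm_mul_le_of_le (h₃ _) cubic_term)).trans_eq ?_
    ring

theorem tanh_comp (hu : PartialDerivBounds u c₁ c₂ c₃) :
    PartialDerivBounds (fun x => Real.tanh (u x)) c₁ (c₂ + c₁ ^ 2)
      (c₃ + 3 * c₁ * c₂ + 2 * c₁ ^ 3) := by
  simpa only [one_mul, mul_one] using
    hu.comp contDiff_tanh norm_deriv_tanh_le norm_deriv_deriv_tanh_le norm_deriv_deriv_deriv_tanh_le

theorem tanh_input_layer {a : Fin d → ℝ} {R : ℝ} (hR : 0 ≤ R) (ha : ∀ j, ‖a j‖ ≤ R) (b : ℝ) :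
    PartialDerivBounds (fun x => Real.tanh (∑ j, a j * x j + b)) R (2 * R ^ 2) (10 * R ^ 3) :=
  ((linear ha).add_const b).tanh_comp.mono le_rfl (by nlinarith) (by nlinarith [pow_nonneg hR 3])

theorem tanh_hidden_layer {ι : Type*} [Fintype ι] {a : ι → ℝ} {w : ι → (Fin d → ℝ) → ℝ}
    {R D : ℝ} (hRι : 2 ≤ R * Fintype.card ι) (hD : 0 ≤ D) (ha : ∀ j, ‖a j‖ ≤ R) (b : ℝ)
    (hw : ∀ j, PartialDerivBounds (w j) D (2 * D ^ 2) (10 * D ^ 3)) :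
    PartialDerivBounds (fun x => Real.tanh (∑ j, a j * w j x + b)) (R * Fintype.card ι * D)
      (2 * (R * Fintype.card ι * D) ^ 2) (10 * (R * Fintype.card ι * D) ^ 3) := by
  have h := ((sum_mul ha hw).add_const b).tanh_comp
  set M := R * Fintype.card ι
  have hM : 2 * M ≤ M ^ 2 := by nlinarith
  have hM₃ : 4 * M ≤ M ^ 3 := by nlinarith
  have h₂ : 2 * M * D ^ 2 ≤ M ^ 2 * D ^ 2 := by gcongr
  have h₃ : 2 * M ^ 2 * D ^ 3 ≤ M ^ 3 * D ^ 3 := by gcongr; nlinarith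
  have h₃' : 4 * M * D ^ 3 ≤ M ^ 3 * D ^ 3 := by gcongr
  exact h.mono le_rfl (by linarith) (by nlinarith [pow_nonneg hD 3])

end PartialDerivBounds

theorem tanh_network_third_deriv_bound (d W : ℕ) (hW : 1 ≤ W) (R : ℝ) (hR : 0 ≤ R)
    (A1 : Fin W → Fin d → ℝ) (b1 : Fin W → ℝ)
    (A : ℕ → Fin W → Fin W → ℝ) (b : ℕ → Fin W → ℝ)
    (hA1 : ∀ i j, |A1 i j| ≤ R) (hA : ∀ ℓ i j, |A ℓ i j| ≤ R)
    (hRW : 2 ≤ R * (W : ℝ))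
    (v : ℕ → (Fin d → ℝ) → Fin W → ℝ)
    (hv1 : ∀ (i : Fin W) (x : Fin d → ℝ),
      v 1 x i = Real.tanh (∑ j, A1 i j * x j + b1 i))
    (hv : ∀ ℓ : ℕ, 2 ≤ ℓ → ∀ (i : Fin W) (x : Fin d → ℝ),
      v ℓ x i = Real.tanh (∑ j, A ℓ i j * v (ℓ - 1) x j + b ℓ i)) :
    ∀ ℓ : ℕ, 1 ≤ ℓ → ∀ (i : Fin W) (k m s : Fin d) (x : Fin d → ℝ),
      |pd (pd (pd (fun y => v ℓ y i) k) m) s x| ≤ 10 * R ^ (3 * ℓ) * (W : ℝ) ^ (3 * ℓ - 3) := by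
  have layer_bounds (n : ℕ) (i : Fin W) :
      PartialDerivBounds (fun x => v (n + 1) x i) (R * (R * W) ^ n)
        (2 * (R * (R * W) ^ n) ^ 2) (10 * (R * (R * W) ^ n) ^ 3) := by
    induction n generalizing i with
    | zero =>
      simpa only [zero_add, hv1, pow_zero, mul_one] using
        PartialDerivBounds.tanh_input_layer hR (hA1 i) (b1 i)
    | succ n ih =>
      have growth : R * (R * W) ^ (n + 1) = R * Fintype.card (Fin W) * (R * (R * W) ^ n) := by
        rw [Fintype.card_fin]
        ring
      simp only [hv (n + 1 + 1) (by omega), growth]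
      exact PartialDerivBounds.tanh_hidden_layer (by simpa only [Fintype.card_fin] using hRW)
        (by positivity) (hA _ i) _ ih
  intro ℓ hℓ i k m s x
  obtain ⟨n, rfl⟩ := Nat.exists_eq_add_of_le' hℓ
  refine ((layer_bounds n i).norm_pd_pd_pd_le k m s x).trans_eq ?_
  rw [show 3 * (n + 1) - 3 = 3 * n by omega]
  ring
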